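/- Fix β > 0, d ≥ 1, s ≥ 0 and ℓ ≥ 0, and suppose f ∈ A(s, ℓ, ℓ). Then for all R > 0 and all p ≥ p_M(s, ℓ) there exists a constant L̃ = L̃(R, p) > 0 such that for all probability measures μ ∈ P_{p,R}(ℝ^d) and ν ∈ P_p(ℝ^d), |M_β(μ) − M_β(ν)| ≤ L̃ · W_p(μ, ν). -/

import Mathlib

open MeasureTheory ENNReal
open scoped NNReal

noncomputable section

/-- Euclidean space `ℝ^d`. -/
abbrev Rd (d : ℕ) := EuclideanSpace ℝ (Fin d)

/-- The weight function `x ↦ exp (-β f x)`. -/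
def wFn (β : ℝ) {d : ℕ} (f : Rd d → ℝ) (x : Rd d) : ℝ := Real.exp (-β * f x)

/-- The weighted mean `M_β(μ) = (∫ x e^{-β f x} dμ) / (∫ e^{-β f x} dμ)`. -/
def wMean (β : ℝ) {d : ℕ} (f : Rd d → ℝ) (μ : Measure (Rd d)) : Rd d :=
  (∫ x, wFn β f x ∂μ)⁻¹ • ∫ x, wFn β f x • x ∂μ

/-- The weighted covariance `C_β(μ)`, a `d × d` matrix. -/
def wCov (β : ℝ) {d : ℕ} (f : Rd d → ℝ) (μ : Measure (Rd d)) :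
    Matrix (Fin d) (Fin d) ℝ := fun i j =>
  (∫ x, wFn β f x ∂μ)⁻¹ *
    ∫ x, wFn β f x * ((x i - wMean β f μ i) * (x j - wMean β f μ j)) ∂μ

/-- Frobenius norm of a matrix. -/
def frobNorm {m n : ℕ} (A : Matrix (Fin m) (Fin n) ℝ) : ℝ :=
  Real.sqrt (∑ i, ∑ j, (A i j) ^ 2)

/-- `S` is the (unique) positive semidefinite square root of `A`. -/
def IsPSDSqrt {d : ℕ} (S A : Matrix (Fin d) (Fin d) ℝ) : Prop :=
  S.PosSemidef ∧ S * S = A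

/-- `μ ∈ P_{p,R}`: the `p`-th moment of `μ` is bounded, `(∫ |x|^p dμ)^{1/p} ≤ R`. -/
def MomLE (p R : ℝ) {d : ℕ} (μ : Measure (Rd d)) : Prop :=
  ∫⁻ x, (‖x‖₊ : ℝ≥0∞) ^ p ∂μ ≤ ENNReal.ofReal (R ^ p)

/-- `μ ∈ P_p`: the `p`-th moment of `μ` is finite. -/
def MomFin (p : ℝ) {d : ℕ} (μ : Measure (Rd d)) : Prop :=
  ∫⁻ x, (‖x‖₊ : ℝ≥0∞) ^ p ∂μ < ⊤

/-- The Wasserstein-`p` distance between two probability measures on `ℝ^d`: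
the infimum over couplings `π` of `μ` and `ν` of `(∬ |x - y|^p dπ)^{1/p}`. -/
def Wp (p : ℝ) {d : ℕ} (μ ν : Measure (Rd d)) : ℝ :=
  (sInf {c : ℝ≥0∞ | ∃ π : Measure (Rd d × Rd d),
      π.map Prod.fst = μ ∧ π.map Prod.snd = ν ∧
      c = (∫⁻ z, (‖z.1 - z.2‖₊ : ℝ≥0∞) ^ p ∂π) ^ (1 / p)}).toReal

/-- `f_* = inf f`. -/
def fStar {d : ℕ} (f : Rd d → ℝ) : ℝ := sInf (Set.range f)

/-- The class `A(s, ℓ, u)` of objective functions: `f` is bounded from below,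
locally Lipschitz with growth exponent `s`, and `f - inf f` grows at least like
`|x|^ℓ` and at most like `|x|^u`. -/
structure ClassA {d : ℕ} (s ℓ u : ℝ) (f : Rd d → ℝ) : Prop where
  bddBelow : BddBelow (Set.range f)
  lip : ∃ Lf > 0, ∀ x y : Rd d, |f x - f y| ≤ Lf * (1 + ‖x‖ + ‖y‖) ^ s * ‖x - y‖
  growth_lower : ∃ cl > 0, ∃ Cl > 0, ∀ x : Rd d, cl * ‖x‖ ^ ℓ - Cl ≤ f x - fStar f
  growth_upper : ∃ cu > 0, ∃ Cu > 0, ∀ x : Rd d, f x - fStar f ≤ cu * ‖x‖ ^ u + Cu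

/-- `p_M(s, ℓ) = s + 2` if `ℓ = 0`, and `1` if `ℓ > 0`. -/
def pM (s ℓ : ℝ) : ℝ := if ℓ = 0 then s + 2 else 1

/-- `p_C(s, ℓ) = s + 3` if `ℓ = 0`, and `1` if `ℓ > 0`. -/
def pC (s ℓ : ℝ) : ℝ := if ℓ = 0 then s + 3 else 1


lemma holderR {α : Type*} [MeasurableSpace α] {π : Measure α} {A B : α → ℝ} {p : ℝ} (hp : 1 ≤ p)
    (hA : ∀ z, 0 ≤ A z) (hB : ∀ z, 0 ≤ B z) (mA : Measurable A) (mB : Measurable B)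
    (iA : Integrable (fun z => A z ^ p) π) (iB : Integrable (fun z => B z ^ p) π) :
    Integrable (fun z => A z ^ (p-1) * B z) π ∧
    ∫ z, A z ^ (p-1) * B z ∂π ≤ (∫ z, A z ^ p ∂π) ^ ((p-1)/p) * (∫ z, B z ^ p ∂π) ^ (1/p) := by
  have hp0 : 0 < p := by linarith
  have i1 : Integrable (fun z => A z ^ (p-1) * B z) π := by
    refine (iA.add iB).mono' (by fun_prop) (Filter.Eventually.of_forall fun z => ?_)
    have h0 : 0 ≤ A z ^ (p-1) * B z := mul_nonneg (Real.rpow_nonneg (hA z) _) (hB z)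
    rw [Real.norm_of_nonneg h0]
    have key : ∀ t : ℝ, 0 ≤ t → t ^ (p-1) * t = t ^ p := by
      intro t ht
      have := Real.rpow_add_one' (x := t) (y := p-1) ht (by linarith)
      rw [← this]; congr 1; ring
    have a0 := Real.rpow_nonneg (hA z) p
    have b0 := Real.rpow_nonneg (hB z) p
    simp only [Pi.add_apply]
    rcases le_total (A z) (B z) with h | h
    · have := mul_le_mul_of_nonneg_right (Real.rpow_le_rpow (hA z) h (by linarith : 0 ≤ p-1)) (hB z)
      rw [key _ (hB z)] at this
      linarith
    · have := mul_le_mul_of_nonneg_left h (Real.rpow_nonneg (hA z) (p-1))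
      rw [key _ (hA z)] at this
      linarith
  refine ⟨i1, ?_⟩
  have IA0 : 0 ≤ ∫ z, A z ^ p ∂π := integral_nonneg fun z => Real.rpow_nonneg (hA z) _
  have IB0 : 0 ≤ ∫ z, B z ^ p ∂π := integral_nonneg fun z => Real.rpow_nonneg (hB z) _
  have hq : 0 ≤ (p-1)/p := div_nonneg (by linarith) hp0.le
  have h := ENNReal.lintegral_mul_norm_pow_le (μ := π) (f := fun z => ENNReal.ofReal (A z ^ p))
    (g := fun z => ENNReal.ofReal (B z ^ p)) (by fun_prop) (by fun_prop) hq
    (by positivity : 0 ≤ 1/p) (by field_simp; ring)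
  rw [← ofReal_integral_eq_lintegral_ofReal iA (Filter.Eventually.of_forall fun z => Real.rpow_nonneg (hA z) _),
    ← ofReal_integral_eq_lintegral_ofReal iB (Filter.Eventually.of_forall fun z => Real.rpow_nonneg (hB z) _),
    ENNReal.ofReal_rpow_of_nonneg IA0 hq, ENNReal.ofReal_rpow_of_nonneg IB0 (by positivity),
    ← ENNReal.ofReal_mul (Real.rpow_nonneg IA0 _)] at h
  rw [← ENNReal.ofReal_le_ofReal_iff (mul_nonneg (Real.rpow_nonneg IA0 _) (Real.rpow_nonneg IB0 _)),
    ofReal_integral_eq_lintegral_ofReal i1 (Filter.Eventually.of_forall fun z =>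
      mul_nonneg (Real.rpow_nonneg (hA z) _) (hB z))]
  refine le_trans (le_of_eq (lintegral_congr fun z => ?_)) h
  rw [ENNReal.ofReal_rpow_of_nonneg (Real.rpow_nonneg (hA z) _) hq,
    ENNReal.ofReal_rpow_of_nonneg (Real.rpow_nonneg (hB z) _) (by positivity),
    ← ENNReal.ofReal_mul (Real.rpow_nonneg (Real.rpow_nonneg (hA z) _) _),
    ← Real.rpow_mul (hA z), ← Real.rpow_mul (hB z)]
  congr 2
  · congr 1; field_simp
  · rw [mul_one_div_cancel hp0.ne', Real.rpow_one]

/-- lower bound on the normalisation -/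
lemma Z_lower {d : ℕ} {w : Rd d → ℝ} (hw : ∀ x, 0 < w x) (ν : Measure (Rd d)) [IsProbabilityMeasure ν]
    (iw : Integrable w ν) (iN : Integrable (fun x => ‖x‖) ν) {c r : ℝ} (hc : 0 < c) (hr : 0 < r)
    (hr2 : 2 * ∫ x, ‖x‖ ∂ν ≤ r) (h : ∀ x, ‖x‖ ≤ r → c ≤ w x) : c / 2 ≤ ∫ x, w x ∂ν := by
  have h1 : ∫ x, (c - c / r * ‖x‖) ∂ν ≤ ∫ x, w x ∂ν := by
    refine integral_mono ((integrable_const c).sub (iN.const_mul _)) iw fun x => ?_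
    have e : c - c / r * ‖x‖ = c * (1 - ‖x‖ / r) := by ring
    simp only [e]
    rcases le_total ‖x‖ r with hx | hx
    · have : 0 ≤ ‖x‖ / r := by positivity
      nlinarith [h x hx]
    · have : 1 ≤ ‖x‖ / r := by rwa [le_div_iff₀ hr, one_mul]
      nlinarith [hw x]
  rw [integral_sub (integrable_const c) (iN.const_mul _), integral_const_mul] at h1
  simp only [integral_const, probReal_univ, one_smul] at h1
  have : c / r * ∫ x, ‖x‖ ∂ν ≤ c / r * (r / 2) := by
    apply mul_le_mul_of_nonneg_left _ (by positivity); linarith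
  have e : c / r * (r / 2) = c / 2 := by field_simp
  linarith

lemma exp_aux {a b u v : ℝ} (ha : 0 < a) (hb : 0 < b) (h : u ≤ v) :
    a * Real.exp (-b * v) ≤ a * Real.exp (-b * u) := by
  apply mul_le_mul_of_nonneg_left _ ha.le
  apply Real.exp_le_exp.2
  nlinarith

set_option maxHeartbeats 1000000 in
lemma mean_bound {d : ℕ} {w : Rd d → ℝ} (hcont : Continuous w) {l a1 b1 a2 b2 : ℝ} (hl : 0 ≤ l)
    (ha1 : 0 < a1) (hb1 : 0 < b1) (ha2 : 0 < a2) (hb2 : 0 < b2)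
    (h1 : ∀ x, w x ≤ a1 * Real.exp (-b1 * ‖x‖ ^ l)) (h2 : ∀ x, a2 * Real.exp (-b2 * ‖x‖ ^ l) ≤ w x) :
    ∃ C1 ≥ 0, ∀ ν : Measure (Rd d), IsProbabilityMeasure ν → Integrable (fun x => ‖x‖) ν →
      ∫ x, w x * ‖x‖ ∂ν ≤ C1 * (1 + ∫ x, ‖x‖ ∂ν) * ∫ x, w x ∂ν := by
  have hpos : ∀ x, 0 < w x := fun x => lt_of_lt_of_le (by positivity) (h2 x)
  have hbd : ∀ x, w x ≤ a1 := fun x => (h1 x).trans (by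
    have : Real.exp (-b1 * ‖x‖ ^ l) ≤ 1 := by
      rw [Real.exp_le_one_iff]
      have : 0 ≤ ‖x‖ ^ l := by positivity
      nlinarith
    nlinarith)
  obtain ⟨K, hK, Dd, hDd⟩ : ∃ K : ℝ, 0 < K ∧ ∃ Dd : ℝ, ∀ r : ℝ, 0 ≤ r → b2 * r ^ l ≤ b1 * (K * r) ^ l + Dd := by
    rcases hl.eq_or_lt with h0 | h0
    · refine ⟨1, one_pos, b2, fun r hr => ?_⟩
      rw [← h0]; simp; linarith
    · refine ⟨(b2 / b1) ^ (1 / l), by positivity, 0, fun r hr => ?_⟩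
      rw [Real.mul_rpow (by positivity) hr, ← Real.rpow_mul (by positivity), one_div_mul_cancel h0.ne',
        Real.rpow_one]
      field_simp; simp
  refine ⟨2 * K + 2 * (a1 / a2 * Real.exp Dd), by positivity, fun ν _ iN => ?_⟩
  set n := ∫ x, ‖x‖ ∂ν with hn
  have hn0 : 0 ≤ n := integral_nonneg fun x => norm_nonneg x
  obtain ⟨r, hr⟩ : ∃ r : ℝ, r = 2 * (1 + n) := ⟨_, rfl⟩
  have hr0 : 0 < r := by rw [hr]; positivity
  have hKr : 0 < K * r := mul_pos hK hr0
  have iw : Integrable w ν := by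
    refine (integrable_const a1).mono' (by fun_prop) (Filter.Eventually.of_forall fun x => ?_)
    rw [Real.norm_of_nonneg (hpos x).le]; exact hbd x
  have iwN : Integrable (fun x => w x * ‖x‖) ν := by
    refine (iN.const_mul a1).mono' (by fun_prop) (Filter.Eventually.of_forall fun x => ?_)
    rw [Real.norm_of_nonneg (mul_nonneg (hpos x).le (norm_nonneg x))]
    exact mul_le_mul_of_nonneg_right (hbd x) (norm_nonneg x)
  have hZ := Z_lower hpos ν iw iN (c := a2 * Real.exp (-b2 * r ^ l)) (r := r) (by positivity) hr0
    (by rw [← hn]; linarith) (fun x hx => le_trans (by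
      exact exp_aux ha2 hb2 (Real.rpow_le_rpow (norm_nonneg x) hx hl)) (h2 x))
  set Z := ∫ x, w x ∂ν with hZd
  have hub : ∫ x, w x * ‖x‖ ∂ν ≤ ∫ x, (K * r * w x + a1 * Real.exp (-b1 * (K * r) ^ l) * ‖x‖) ∂ν := by
    refine integral_mono iwN ((iw.const_mul _).add (iN.const_mul _)) fun x => ?_
    simp only
    rcases le_total ‖x‖ (K * r) with hx | hx
    · have := mul_le_mul_of_nonneg_left hx (hpos x).le
      have : 0 ≤ a1 * Real.exp (-b1 * (K * r) ^ l) * ‖x‖ := by positivity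
      linarith
    · have : w x ≤ a1 * Real.exp (-b1 * (K * r) ^ l) := (h1 x).trans (by
        exact exp_aux ha1 hb1 (Real.rpow_le_rpow hKr.le hx hl))
      have := mul_le_mul_of_nonneg_right this (norm_nonneg x)
      have : 0 ≤ K * r * w x := mul_nonneg hKr.le (hpos x).le
      linarith
  rw [integral_add (iw.const_mul _) (iN.const_mul _), integral_const_mul, integral_const_mul] at hub
  rw [← hn, ← hZd] at hub
  have e1 : a1 * Real.exp (-b1 * (K * r) ^ l) ≤ 2 * (a1 / a2 * Real.exp Dd) * Z := by
    have : Real.exp (-b1 * (K * r) ^ l) ≤ Real.exp Dd * Real.exp (-b2 * r ^ l) := by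
      rw [← Real.exp_add]; apply Real.exp_le_exp.2
      have := hDd r hr0.le
      linarith
    calc a1 * Real.exp (-b1 * (K * r) ^ l) ≤ a1 * (Real.exp Dd * Real.exp (-b2 * r ^ l)) := by gcongr
      _ = 2 * (a1 / a2 * Real.exp Dd) * (a2 * Real.exp (-b2 * r ^ l) / 2) := by field_simp
      _ ≤ _ := by gcongr
  have hZ0 : 0 ≤ Z := le_trans (by positivity) hZ
  have e2 : a1 * Real.exp (-b1 * (K * r) ^ l) * n ≤ 2 * (a1 / a2 * Real.exp Dd) * Z * (1 + n) := by
    have h3 : 0 ≤ 2 * (a1 / a2 * Real.exp Dd) * Z := by positivity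
    nlinarith
  calc _ ≤ _ := hub
    _ ≤ K * r * Z + 2 * (a1 / a2 * Real.exp Dd) * Z * (1 + n) := by linarith
    _ = _ := by rw [hr]; ring

/-- generic weighted mean -/
def gMean {d : ℕ} (w : Rd d → ℝ) (μ : Measure (Rd d)) : Rd d := (∫ x, w x ∂μ)⁻¹ • ∫ x, w x • x ∂μ

lemma gMean_norm {d : ℕ} {w : Rd d → ℝ} (hpos : ∀ x, 0 < w x) {ν : Measure (Rd d)} {C : ℝ}
    (hZ : 0 < ∫ x, w x ∂ν) (h : ∫ x, w x * ‖x‖ ∂ν ≤ C * ∫ x, w x ∂ν) : ‖gMean w ν‖ ≤ C := by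
  unfold gMean
  rw [norm_smul, norm_inv, Real.norm_of_nonneg hZ.le, inv_mul_le_iff₀ hZ, mul_comm]
  refine (norm_integral_le_integral_norm _).trans (le_trans (le_of_eq ?_) h)
  refine integral_congr_ae (Filter.Eventually.of_forall fun x => ?_)
  simp only [norm_smul, Real.norm_of_nonneg (hpos x).le]

set_option maxHeartbeats 1000000 in
lemma core {d : ℕ} {w : Rd d → ℝ} (hpos : ∀ x, 0 < w x) (hcont : Continuous w) {B : ℝ}
    (hB : ∀ x, w x ≤ B) {p : ℝ} (hp : 1 ≤ p) {D : ℝ} (hD : 0 ≤ D)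
    (hl1 : ∀ x y, |w x - w y| ≤ D * ((1 + ‖x‖ + ‖y‖) ^ (p-1) * ‖x - y‖))
    (hl2 : ∀ x y, ‖w x • x - w y • y‖ ≤ D * ((1 + ‖x‖ + ‖y‖) ^ (p-1) * ‖x - y‖))
    {C1 : ℝ} (hC1 : 0 ≤ C1)
    (hmean : ∀ ν : Measure (Rd d), IsProbabilityMeasure ν → Integrable (fun x => ‖x‖) ν →
      ∫ x, w x * ‖x‖ ∂ν ≤ C1 * (1 + ∫ x, ‖x‖ ∂ν) * ∫ x, w x ∂ν)
    (hlow : ∀ r : ℝ, ∃ c > 0, ∀ x, ‖x‖ ≤ r → c ≤ w x) {R : ℝ} (hR : 0 < R) :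
    ∃ L > 0, ∀ π : Measure (Rd d × Rd d), IsProbabilityMeasure π →
      Integrable (fun z => ‖z.1‖ ^ p) π → ∫ z, ‖z.1‖ ^ p ∂π ≤ R ^ p →
      Integrable (fun z => ‖z.1 - z.2‖ ^ p) π →
      ‖gMean w (π.map Prod.fst) - gMean w (π.map Prod.snd)‖ ≤
        L * (∫ z, ‖z.1 - z.2‖ ^ p ∂π) ^ (1/p) := by
  have hp0 : 0 < p := by linarith
  have hRp : 0 < R ^ p := by positivity
  obtain ⟨c0, hc0, hc0'⟩ := hlow (2 * (1 + R ^ p))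
  set K : ℝ := 3 ^ p * (1 + 2 ^ p * R ^ p + 1) with hK
  have hK0 : 0 < K := by positivity
  set L1 : ℝ := 2 / c0 * ((1 + C1 * (1 + (1 + R ^ p + 1))) * (D * K ^ ((p-1)/p))) with hL1
  have hL10 : 0 ≤ L1 := by positivity
  set L2 : ℝ := C1 * (2 * (1 + (1 + R ^ p)) + 1) with hL2
  have hL20 : 0 ≤ L2 := by positivity
  refine ⟨1 + L1 + L2, by positivity, fun π _ iX hX iB => ?_⟩
  have hμ : IsProbabilityMeasure (π.map Prod.fst) := Measure.isProbabilityMeasure_map (by fun_prop)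
  have hν : IsProbabilityMeasure (π.map Prod.snd) := Measure.isProbabilityMeasure_map (by fun_prop)
  set I := ∫ z, ‖z.1 - z.2‖ ^ p ∂π with hI
  have hI0 : 0 ≤ I := integral_nonneg fun z => by positivity
  set c := I ^ (1/p) with hc
  have hcnn : 0 ≤ c := by positivity
  have hle : ∀ t : ℝ, 0 ≤ t → t ≤ 1 + t ^ p := by
    intro t ht
    rcases le_total t 1 with h | h
    · have : 0 ≤ t ^ p := by positivity
      linarith
    · have := Real.rpow_le_rpow_of_exponent_le h hp
      rw [Real.rpow_one] at this; linarith
  have iX1 : Integrable (fun z : Rd d × Rd d => ‖z.1‖) π := by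
    refine ((integrable_const (1:ℝ)).add iX).mono' (by fun_prop) (Filter.Eventually.of_forall fun z => ?_)
    rw [norm_norm]; exact hle _ (norm_nonneg _)
  have iB1 : Integrable (fun z : Rd d × Rd d => ‖z.1 - z.2‖) π := by
    refine ((integrable_const (1:ℝ)).add iB).mono' (by fun_prop) (Filter.Eventually.of_forall fun z => ?_)
    rw [norm_norm]; exact hle _ (norm_nonneg _)
  have iY1 : Integrable (fun z : Rd d × Rd d => ‖z.2‖) π := by
    refine (iX1.add iB1).mono' (by fun_prop) (Filter.Eventually.of_forall fun z => ?_)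
    rw [norm_norm]
    have := norm_sub_norm_le z.2 z.1
    rw [norm_sub_rev] at this
    simp only [Pi.add_apply]; linarith
  have hX1 : ∫ z, ‖z.1‖ ∂π ≤ 1 + R ^ p := by
    have h := integral_mono iX1 ((integrable_const (1:ℝ)).add iX) (fun z => hle _ (norm_nonneg _))
    simp only [Pi.add_apply] at h
    rw [integral_add (integrable_const _) iX] at h
    simp only [integral_const, probReal_univ, one_smul] at h
    linarith
  have hB1 : ∫ z, ‖z.1 - z.2‖ ∂π ≤ c := by
    have h := (holderR (π := π) (A := fun _ => (1:ℝ)) (B := fun z : Rd d × Rd d => ‖z.1 - z.2‖) hp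
      (fun _ => zero_le_one) (fun z => norm_nonneg _) (by fun_prop) (by fun_prop)
      (by simp) iB).2
    simpa [hc, hI] using h
  have hY1 : ∫ z, ‖z.2‖ ∂π ≤ 1 + R ^ p + c := by
    have h := integral_mono iY1 (iX1.add iB1) (fun z => by
      have := norm_sub_norm_le z.2 z.1
      rw [norm_sub_rev] at this
      simp only [Pi.add_apply]; linarith)
    simp only [Pi.add_apply] at h
    rw [integral_add iX1 iB1] at h
    linarith
  -- push forward
  have tr : ∀ {F : Type} [NormedAddCommGroup F] [NormedSpace ℝ F] (g : Rd d → F), Continuous g →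
      SecondCountableTopology F →
      ∫ x, g x ∂(π.map Prod.fst) = ∫ z, g z.1 ∂π ∧ ∫ x, g x ∂(π.map Prod.snd) = ∫ z, g z.2 ∂π := by
    intro F _ _ g hg _
    exact ⟨integral_map (by fun_prop) hg.aestronglyMeasurable,
      integral_map (by fun_prop) hg.aestronglyMeasurable⟩
  have jX : Integrable (fun x : Rd d => ‖x‖) (π.map Prod.fst) :=
    (integrable_map_measure (by fun_prop) (by fun_prop)).2 iX1
  have jY : Integrable (fun x : Rd d => ‖x‖) (π.map Prod.snd) :=
    (integrable_map_measure (by fun_prop) (by fun_prop)).2 iY1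
  have iw : ∀ ρ : Measure (Rd d), IsProbabilityMeasure ρ → Integrable w ρ := by
    intro ρ _
    refine (integrable_const B).mono' (by fun_prop) (Filter.Eventually.of_forall fun x => ?_)
    rw [Real.norm_of_nonneg (hpos x).le]; exact hB x
  have hZpos : ∀ ρ : Measure (Rd d), IsProbabilityMeasure ρ → 0 < ∫ x, w x ∂ρ := by
    intro ρ hρ
    rw [integral_pos_iff_support_of_nonneg (fun x => (hpos x).le) (iw ρ hρ)]
    have : Function.support w = Set.univ := by
      ext x; simp [(hpos x).ne']
    simp [this]
  have hXm : ∫ x, ‖x‖ ∂(π.map Prod.fst) ≤ 1 + R ^ p := by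
    rw [(tr (fun x => ‖x‖) continuous_norm inferInstance).1]; exact hX1
  have hYm : ∫ x, ‖x‖ ∂(π.map Prod.snd) ≤ 1 + R ^ p + c := by
    rw [(tr (fun x => ‖x‖) continuous_norm inferInstance).2]; exact hY1
  have mμ : ‖gMean w (π.map Prod.fst)‖ ≤ C1 * (1 + (1 + R ^ p)) :=
    (gMean_norm hpos (hZpos _ hμ) (hmean _ hμ jX)).trans (by gcongr)
  have mν : ‖gMean w (π.map Prod.snd)‖ ≤ C1 * (1 + (1 + R ^ p + c)) :=
    (gMean_norm hpos (hZpos _ hν) (hmean _ hν jY)).trans (by gcongr)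
  rcases le_total 1 c with h1c | h1c
  · have := norm_sub_le (gMean w (π.map Prod.fst)) (gMean w (π.map Prod.snd))
    have h3 : C1 * (1 + (1 + R ^ p)) + C1 * (1 + (1 + R ^ p + c)) ≤ L2 * c := by
      rw [hL2]
      have : C1 * (2 * (1 + (1 + R ^ p))) * 1 ≤ C1 * (2 * (1 + (1 + R ^ p))) * c := by gcongr
      nlinarith
    have h4 : L2 * c ≤ (1 + L1 + L2) * c := by gcongr; linarith
    linarith
  · set m := gMean w (π.map Prod.snd) with hm
    have hZ := Z_lower hpos (π.map Prod.fst) (iw _ hμ) jX hc0 (r := 2 * (1 + R ^ p)) (by positivity)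
      (by linarith) hc0'
    have mN : Measurable (fun z : Rd d × Rd d => 1 + ‖z.1‖ + ‖z.2‖) := by fun_prop
    have hNp : ∀ z : Rd d × Rd d, (1 + ‖z.1‖ + ‖z.2‖) ^ p ≤
        3 ^ p * (1 + 2 ^ p * ‖z.1‖ ^ p + ‖z.1 - z.2‖ ^ p) := by
      intro z
      have h0 : 1 + ‖z.1‖ + ‖z.2‖ ≤ 1 + 2 * ‖z.1‖ + ‖z.1 - z.2‖ := by
        have := norm_sub_norm_le z.2 z.1
        rw [norm_sub_rev] at this
        linarith
      have hx := norm_nonneg z.1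
      have hb := norm_nonneg (z.1 - z.2)
      refine (Real.rpow_le_rpow (by positivity) h0 hp0.le).trans ?_
      have gen : ∀ M : ℝ, 0 ≤ M → 1 ≤ M → 2 * ‖z.1‖ ≤ M → ‖z.1 - z.2‖ ≤ M →
          (1 + 2 * ‖z.1‖ + ‖z.1 - z.2‖) ^ p ≤ 3 ^ p * M ^ p := by
        intro M hM h1 h2 h3
        rw [← Real.mul_rpow (by norm_num) hM]
        exact Real.rpow_le_rpow (by positivity) (by linarith) hp0.le
      have e : (2 * ‖z.1‖) ^ p = 2 ^ p * ‖z.1‖ ^ p := Real.mul_rpow (by norm_num) hx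
      have q1 : 0 ≤ 2 ^ p * ‖z.1‖ ^ p := by positivity
      have q2 : 0 ≤ ‖z.1 - z.2‖ ^ p := by positivity
      have q3 : 0 ≤ (3:ℝ) ^ p := by positivity
      rcases le_total 1 (2 * ‖z.1‖) with ha | ha <;>
      rcases le_total 1 (‖z.1 - z.2‖) with hb' | hb' <;>
      rcases le_total (2 * ‖z.1‖) (‖z.1 - z.2‖) with hc' | hc' <;>
      first
      | (refine (gen 1 (by linarith) (by linarith) (by linarith) (by linarith)).trans ?_
         rw [Real.one_rpow]; gcongr; linarith)
      | (refine (gen (2 * ‖z.1‖) (by linarith) (by linarith) (by linarith) (by linarith)).trans ?_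
         rw [e]; gcongr; linarith)
      | (refine (gen (‖z.1 - z.2‖) (by linarith) (by linarith) (by linarith) (by linarith)).trans ?_
         gcongr; linarith)
    have iRHS : Integrable (fun z : Rd d × Rd d => 3 ^ p * (1 + 2 ^ p * ‖z.1‖ ^ p + ‖z.1 - z.2‖ ^ p)) π :=
      (((integrable_const (1:ℝ)).add (iX.const_mul _)).add iB).const_mul _
    have iNp : Integrable (fun z : Rd d × Rd d => (1 + ‖z.1‖ + ‖z.2‖) ^ p) π := by
      refine iRHS.mono' (mN.pow_const p).aestronglyMeasurable (Filter.Eventually.of_forall fun z => ?_)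
      rw [Real.norm_of_nonneg (by positivity)]; exact hNp z
    have hI1 : I ≤ 1 := by
      by_contra hcon
      push Not at hcon
      have : 1 < c := Real.one_lt_rpow hcon (by positivity)
      linarith
    have hNK : ∫ z, (1 + ‖z.1‖ + ‖z.2‖) ^ p ∂π ≤ K := by
      have h := integral_mono iNp iRHS hNp
      rw [integral_const_mul, integral_add (f := fun z : Rd d × Rd d => 1 + 2 ^ p * ‖z.1‖ ^ p) ((integrable_const (1:ℝ)).add (iX.const_mul _)) iB,
        integral_add (integrable_const (1:ℝ)) (iX.const_mul _), integral_const_mul] at h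
      simp only [integral_const, probReal_univ, one_smul] at h
      refine h.trans ?_
      rw [hK]; gcongr
    obtain ⟨iH, hH⟩ := holderR (π := π) (A := fun z : Rd d × Rd d => 1 + ‖z.1‖ + ‖z.2‖)
      (B := fun z : Rd d × Rd d => ‖z.1 - z.2‖) hp
      (fun z => by positivity) (fun z => norm_nonneg _) mN (by fun_prop) iNp iB
    have hH' : ∫ z, (1 + ‖z.1‖ + ‖z.2‖) ^ (p-1) * ‖z.1 - z.2‖ ∂π ≤ K ^ ((p-1)/p) * c := by
      refine hH.trans ?_
      have : 0 ≤ (p-1)/p := div_nonneg (by linarith) hp0.le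
      have h0 : 0 ≤ ∫ z, (1 + ‖z.1‖ + ‖z.2‖) ^ p ∂π := integral_nonneg fun z => by positivity
      exact mul_le_mul_of_nonneg_right (Real.rpow_le_rpow h0 hNK this) hcnn
    -- identity
    have isX : Integrable (fun z : Rd d × Rd d => w z.1 • z.1) π := by
      refine (iX1.const_mul B).mono' (by fun_prop) (Filter.Eventually.of_forall fun z => ?_)
      rw [norm_smul, Real.norm_of_nonneg (hpos _).le]
      exact mul_le_mul_of_nonneg_right (hB _) (norm_nonneg _)
    have isY : Integrable (fun z : Rd d × Rd d => w z.2 • z.2) π := by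
      refine (iY1.const_mul B).mono' (by fun_prop) (Filter.Eventually.of_forall fun z => ?_)
      rw [norm_smul, Real.norm_of_nonneg (hpos _).le]
      exact mul_le_mul_of_nonneg_right (hB _) (norm_nonneg _)
    have iwX : Integrable (fun z : Rd d × Rd d => w z.1) π :=
      (integrable_map_measure (by fun_prop) (by fun_prop)).1 (iw _ hμ)
    have iwY : Integrable (fun z : Rd d × Rd d => w z.2) π :=
      (integrable_map_measure (by fun_prop) (by fun_prop)).1 (iw _ hν)
    have key : (∫ x, w x ∂(π.map Prod.fst)) • (gMean w (π.map Prod.fst) - m) =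
        ∫ z, ((w z.1 • z.1 - w z.2 • z.2) - (w z.1 - w z.2) • m) ∂π := by
      rw [integral_sub (f := fun z : Rd d × Rd d => w z.1 • z.1 - w z.2 • z.2)
        (g := fun z : Rd d × Rd d => (w z.1 - w z.2) • m) (isX.sub isY) ((iwX.sub iwY).smul_const m), integral_sub isX isY,
        integral_smul_const, integral_sub iwX iwY]
      have t1 := tr w hcont inferInstance
      have t2 := tr (fun x => w x • x) (by fun_prop) inferInstance
      rw [← t1.1, ← t1.2, ← t2.1, ← t2.2, smul_sub]
      have g : ∀ ρ : Measure (Rd d), IsProbabilityMeasure ρ →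
          (∫ x, w x ∂ρ) • gMean w ρ = ∫ x, w x • x ∂ρ := by
        intro ρ hρ
        unfold gMean
        rw [smul_inv_smul₀ (hZpos ρ hρ).ne']
      rw [sub_smul, hm, g _ hμ, g _ hν]
      abel
    have bound : ‖(∫ x, w x ∂(π.map Prod.fst)) • (gMean w (π.map Prod.fst) - m)‖ ≤
        (1 + ‖m‖) * (D * (K ^ ((p-1)/p) * c)) := by
      rw [key]
      have hb := norm_integral_le_of_norm_le (f := fun z : Rd d × Rd d =>
        ((w z.1 • z.1 - w z.2 • z.2) - (w z.1 - w z.2) • m)) ((iH.const_mul D).const_mul (1 + ‖m‖))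
        (Filter.Eventually.of_forall fun z => by
          refine (norm_sub_le _ _).trans ?_
          rw [norm_smul, Real.norm_eq_abs]
          have := mul_le_mul_of_nonneg_right (hl1 z.1 z.2) (norm_nonneg m)
          have := hl2 z.1 z.2
          linarith)
      rw [integral_const_mul, integral_const_mul] at hb
      refine hb.trans ?_
      gcongr
    rw [norm_smul, Real.norm_of_nonneg (hZpos _ hμ).le] at bound
    have hmb : ‖m‖ ≤ C1 * (1 + (1 + R ^ p + 1)) := mν.trans (by gcongr)
    have b2 : c0 / 2 * ‖gMean w (π.map Prod.fst) - m‖ ≤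
        (1 + C1 * (1 + (1 + R ^ p + 1))) * (D * (K ^ ((p-1)/p) * c)) :=
      (mul_le_mul_of_nonneg_right hZ (norm_nonneg _)).trans (bound.trans (by gcongr))
    have b3 : ‖gMean w (π.map Prod.fst) - m‖ ≤ L1 * c := by
      have : ‖gMean w (π.map Prod.fst) - m‖ = 2 / c0 * (c0 / 2 * ‖gMean w (π.map Prod.fst) - m‖) := by
        field_simp
      rw [this, hL1]
      calc _ ≤ 2 / c0 * ((1 + C1 * (1 + (1 + R ^ p + 1))) * (D * (K ^ ((p-1)/p) * c))) := by gcongr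
        _ = _ := by ring
    have : L1 * c ≤ (1 + L1 + L2) * c := by gcongr; linarith
    linarith

lemma exp_diff (a b : ℝ) : |Real.exp a - Real.exp b| ≤ |a - b| * (Real.exp a + Real.exp b) := by
  have gen : ∀ u v : ℝ, v ≤ u → |Real.exp u - Real.exp v| ≤ |u - v| * (Real.exp u + Real.exp v) := by
    intro u v h
    have h1 := Real.exp_le_exp.2 h
    rw [abs_of_nonneg (by linarith), abs_of_nonneg (by linarith)]
    have h2 := Real.add_one_le_exp (v - u)
    have h3 : Real.exp v = Real.exp u * Real.exp (v - u) := by rw [← Real.exp_add]; congr 1; ring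
    have h4 := mul_le_mul_of_nonneg_left h2 (Real.exp_pos u).le
    have h5 : 0 ≤ (u - v) * Real.exp v := mul_nonneg (by linarith) (Real.exp_pos v).le
    nlinarith
  rcases le_total b a with h | h
  · exact gen a b h
  · rw [abs_sub_comm, abs_sub_comm a b, add_comm]; exact gen b a h

lemma wFn_pos (β : ℝ) {d : ℕ} (f : Rd d → ℝ) (x : Rd d) : 0 < wFn β f x := Real.exp_pos _

lemma lip_basic {β : ℝ} (hβ : 0 < β) {d : ℕ} {f : Rd d → ℝ} {s Lf : ℝ} (hs : 0 ≤ s) (hL : 0 < Lf)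
    (h : ∀ x y : Rd d, |f x - f y| ≤ Lf * (1 + ‖x‖ + ‖y‖) ^ s * ‖x - y‖) (x y : Rd d) :
    |wFn β f x - wFn β f y| ≤
      (1 + β * Lf) * ((wFn β f x + wFn β f y) * (1 + ‖x‖ + ‖y‖) ^ (s+1)) * ‖x - y‖ ∧
    ‖wFn β f x • x - wFn β f y • y‖ ≤
      (1 + β * Lf) * ((wFn β f x + wFn β f y) * (1 + ‖x‖ + ‖y‖) ^ (s+1)) * ‖x - y‖ := by
  have h0 : |wFn β f x - wFn β f y| ≤
      (β * Lf) * ((wFn β f x + wFn β f y) * (1 + ‖x‖ + ‖y‖) ^ s) * ‖x - y‖ := by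
    have h1 := exp_diff (-β * f x) (-β * f y)
    have e : |-β * f x - -β * f y| = β * |f x - f y| := by
      rw [← mul_sub, abs_mul, abs_neg, abs_of_pos hβ]
    rw [e] at h1
    change |wFn β f x - wFn β f y| ≤ β * |f x - f y| * (wFn β f x + wFn β f y) at h1
    refine h1.trans ?_
    have hS : 0 ≤ wFn β f x + wFn β f y := (add_pos (wFn_pos β f x) (wFn_pos β f y)).le
    calc β * |f x - f y| * (wFn β f x + wFn β f y)
        ≤ β * (Lf * (1 + ‖x‖ + ‖y‖) ^ s * ‖x - y‖) * (wFn β f x + wFn β f y) := by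
          gcongr; exact h x y
      _ = _ := by ring
  have px := wFn_pos β f x
  have py := wFn_pos β f y
  generalize wFn β f x = u at *
  generalize wFn β f y = v at *
  have hx := norm_nonneg x
  have hy := norm_nonneg y
  have hN : 1 ≤ 1 + ‖x‖ + ‖y‖ := by linarith
  have hyN : ‖y‖ ≤ 1 + ‖x‖ + ‖y‖ := by linarith
  generalize 1 + ‖x‖ + ‖y‖ = N at *
  have e1 : N ^ (s+1) = N ^ s * N := Real.rpow_add_one (by linarith) s
  have hNs : 1 ≤ N ^ s := Real.one_le_rpow hN hs
  have hN1 : 1 ≤ N ^ (s+1) := Real.one_le_rpow hN (by linarith)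
  have hbL : 0 < β * Lf := by positivity
  have hN0 : 0 ≤ N := by linarith
  have b0 := norm_nonneg (x - y)
  constructor
  · refine h0.trans ?_
    gcongr
    · linarith
    · linarith
  · have e2 : u • x - v • y = u • (x - y) + (u - v) • y := by
      rw [smul_sub, sub_smul]; abel
    rw [e2]
    refine (norm_add_le _ _).trans ?_
    rw [norm_smul, norm_smul, Real.norm_of_nonneg px.le, Real.norm_eq_abs]
    have a1 : |u - v| * ‖y‖ ≤ (β * Lf) * ((u + v) * N ^ (s+1)) * ‖x - y‖ := by
      calc |u - v| * ‖y‖ ≤ ((β * Lf) * ((u + v) * N ^ s) * ‖x - y‖) * N := by gcongr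
        _ = _ := by rw [e1]; ring
    have a2 : u * ‖x - y‖ ≤ ((u + v) * N ^ (s+1)) * ‖x - y‖ := by
      gcongr
      nlinarith
    linarith

lemma sup_bound {s b l : ℝ} (hs : 0 ≤ s) (hb : 0 < b) (hl : 0 < l) :
    ∃ K > 0, ∀ t : ℝ, 0 ≤ t → Real.exp (-b * t ^ l) * (1 + t) ^ (s+1) ≤ K := by
  have h := tendsto_rpow_mul_exp_neg_mul_atTop_nhds_zero ((s+1)/l) b hb
  have h2 := h.comp (tendsto_rpow_atTop hl)
  have h3 := h2.eventually (gt_mem_nhds zero_lt_one)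
  obtain ⟨T, hT⟩ := Filter.eventually_atTop.1 h3
  set T' := max T 1 with hT'
  have hT1 : 1 ≤ T' := le_max_right _ _
  refine ⟨2 ^ (s+1) + (1 + T') ^ (s+1), by positivity, fun t ht => ?_⟩
  have p1 : 0 ≤ (2:ℝ) ^ (s+1) := by positivity
  have p2 : 0 ≤ (1 + T') ^ (s+1) := by positivity
  rcases le_total t T' with h | h
  · have e1 : Real.exp (-b * t ^ l) ≤ 1 := by
      rw [Real.exp_le_one_iff]
      have : 0 ≤ t ^ l := by positivity
      nlinarith
    have e2 : (1 + t) ^ (s+1) ≤ (1 + T') ^ (s+1) := by gcongr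
    have e3 : 0 ≤ (1 + t) ^ (s+1) := by positivity
    nlinarith
  · have h4 := hT t ((le_max_left _ _).trans h)
    simp only [Function.comp] at h4
    rw [← Real.rpow_mul ht, mul_div_cancel₀ _ hl.ne'] at h4
    have e2 : (1 + t) ^ (s+1) ≤ 2 ^ (s+1) * t ^ (s+1) := by
      rw [← Real.mul_rpow (by norm_num) ht]
      apply Real.rpow_le_rpow <;> linarith
    calc _ ≤ Real.exp (-b * t ^ l) * (2 ^ (s+1) * t ^ (s+1)) := by gcongr
      _ = 2 ^ (s+1) * (t ^ (s+1) * Real.exp (-b * t ^ l)) := by ring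
      _ ≤ 2 ^ (s+1) * 1 := by gcongr
      _ ≤ _ := by linarith

lemma lip_full {β : ℝ} (hβ : 0 < β) {d : ℕ} {f : Rd d → ℝ} {s Lf l a1 b1 p : ℝ} (hs : 0 ≤ s)
    (hl : 0 ≤ l) (hL : 0 < Lf)
    (h : ∀ x y : Rd d, |f x - f y| ≤ Lf * (1 + ‖x‖ + ‖y‖) ^ s * ‖x - y‖)
    (ha1 : 0 < a1) (hb1 : 0 < b1) (hw : ∀ x, wFn β f x ≤ a1 * Real.exp (-b1 * ‖x‖ ^ l))
    (hp1 : 1 ≤ p) (hp : l = 0 → s + 2 ≤ p) :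
    ∃ D ≥ 0, ∀ x y : Rd d, |wFn β f x - wFn β f y| ≤ D * ((1 + ‖x‖ + ‖y‖) ^ (p-1) * ‖x - y‖) ∧
      ‖wFn β f x • x - wFn β f y • y‖ ≤ D * ((1 + ‖x‖ + ‖y‖) ^ (p-1) * ‖x - y‖) := by
  have hwa : ∀ x, wFn β f x ≤ a1 := fun x => (hw x).trans (by
    have : Real.exp (-b1 * ‖x‖ ^ l) ≤ 1 := by
      rw [Real.exp_le_one_iff]
      have : 0 ≤ ‖x‖ ^ l := by positivity
      nlinarith
    nlinarith)
  have hN1 : ∀ x y : Rd d, 1 ≤ 1 + ‖x‖ + ‖y‖ := fun x y => by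
    linarith [norm_nonneg x, norm_nonneg y]
  have hNp : ∀ x y : Rd d, 1 ≤ (1 + ‖x‖ + ‖y‖) ^ (p-1) := fun x y =>
    Real.one_le_rpow (hN1 x y) (by linarith)
  rcases hl.eq_or_lt with h0 | h0
  · refine ⟨(1 + β * Lf) * (2 * a1), by positivity, fun x y => ?_⟩
    have hb := lip_basic hβ hs hL h x y
    have : (1 + β * Lf) * ((wFn β f x + wFn β f y) * (1 + ‖x‖ + ‖y‖) ^ (s+1)) * ‖x - y‖ ≤
        (1 + β * Lf) * (2 * a1) * ((1 + ‖x‖ + ‖y‖) ^ (p-1) * ‖x - y‖) := by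
      have e1 : wFn β f x + wFn β f y ≤ 2 * a1 := by linarith [hwa x, hwa y]
      have e2 : (1 + ‖x‖ + ‖y‖) ^ (s+1) ≤ (1 + ‖x‖ + ‖y‖) ^ (p-1) :=
        Real.rpow_le_rpow_of_exponent_le (hN1 x y) (by linarith [hp h0.symm])
      calc _ ≤ (1 + β * Lf) * ((2 * a1) * (1 + ‖x‖ + ‖y‖) ^ (p-1)) * ‖x - y‖ := by gcongr
        _ = _ := by ring
    exact ⟨hb.1.trans this, hb.2.trans this⟩
  · obtain ⟨K, hK, hK'⟩ := sup_bound hs hb1 h0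
    have hwK : ∀ x, wFn β f x * (1 + ‖x‖) ^ (s+1) ≤ a1 * K := fun x => by
      calc _ ≤ a1 * Real.exp (-b1 * ‖x‖ ^ l) * (1 + ‖x‖) ^ (s+1) := by gcongr; exact hw x
        _ = a1 * (Real.exp (-b1 * ‖x‖ ^ l) * (1 + ‖x‖) ^ (s+1)) := by ring
        _ ≤ _ := by gcongr; exact hK' _ (norm_nonneg x)
    have hwx : ∀ x, wFn β f x * (1 + ‖x‖) ≤ a1 * K := fun x => by
      refine le_trans ?_ (hwK x)
      apply mul_le_mul_of_nonneg_left _ (wFn_pos β f x).le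
      have := Real.rpow_le_rpow_of_exponent_le (x := 1 + ‖x‖) (by linarith [norm_nonneg x])
        (by linarith : 1 ≤ s + 1)
      rwa [Real.rpow_one] at this
    refine ⟨(1 + β * Lf) * (2 * (2 ^ (s+1) * (a1 * K))) + 2 * (a1 * K), by positivity, fun x y => ?_⟩
    have bnd : ∀ q : ℝ, q ≤ ((1 + β * Lf) * (2 * (2 ^ (s+1) * (a1 * K))) + 2 * (a1 * K)) * ‖x - y‖ →
        q ≤ ((1 + β * Lf) * (2 * (2 ^ (s+1) * (a1 * K))) + 2 * (a1 * K)) *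
          ((1 + ‖x‖ + ‖y‖) ^ (p-1) * ‖x - y‖) := by
      intro q hq
      refine hq.trans ?_
      gcongr
      exact le_mul_of_one_le_left (norm_nonneg _) (hNp x y)
    have q0 : 0 ≤ (1 + β * Lf) * (2 * (2 ^ (s+1) * (a1 * K))) := by positivity
    have q1 : 0 ≤ 2 * (a1 * K) := by positivity
    have nb := norm_nonneg (x - y)
    rcases le_total ‖x - y‖ 1 with hxy | hxy
    · have hb := lip_basic hβ hs hL h x y
      have e : ∀ u v : Rd d, ‖u - v‖ ≤ 1 → wFn β f u * (1 + ‖u‖ + ‖v‖) ^ (s+1) ≤ 2 ^ (s+1) * (a1 * K) := by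
        intro u v huv
        have : 1 + ‖u‖ + ‖v‖ ≤ 2 * (1 + ‖u‖) := by
          have := norm_sub_norm_le v u
          rw [norm_sub_rev] at this
          linarith [norm_nonneg u]
        calc _ ≤ wFn β f u * (2 * (1 + ‖u‖)) ^ (s+1) := by
              apply mul_le_mul_of_nonneg_left _ (wFn_pos β f u).le
              exact Real.rpow_le_rpow (by positivity) this (by linarith)
          _ = 2 ^ (s+1) * (wFn β f u * (1 + ‖u‖) ^ (s+1)) := by
              rw [Real.mul_rpow (by norm_num) (by positivity)]; ring
          _ ≤ _ := mul_le_mul_of_nonneg_left (hwK u) (by positivity)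
      have e1 := e x y hxy
      have e2 := e y x (by rwa [norm_sub_rev])
      rw [show 1 + ‖y‖ + ‖x‖ = 1 + ‖x‖ + ‖y‖ by ring] at e2
      have : (1 + β * Lf) * ((wFn β f x + wFn β f y) * (1 + ‖x‖ + ‖y‖) ^ (s+1)) * ‖x - y‖ ≤
          ((1 + β * Lf) * (2 * (2 ^ (s+1) * (a1 * K))) + 2 * (a1 * K)) * ‖x - y‖ := by
        apply mul_le_mul_of_nonneg_right _ nb
        have : (1 + β * Lf) * ((wFn β f x + wFn β f y) * (1 + ‖x‖ + ‖y‖) ^ (s+1)) ≤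
          (1 + β * Lf) * (2 * (2 ^ (s+1) * (a1 * K))) := by
          apply mul_le_mul_of_nonneg_left _ (by positivity)
          rw [add_mul]; linarith
        linarith
      exact ⟨bnd _ (hb.1.trans this), bnd _ (hb.2.trans this)⟩
    · have px := wFn_pos β f x
      have py := wFn_pos β f y
      have e1 := hwx x
      have e2 := hwx y
      have hx := mul_nonneg px.le (norm_nonneg x)
      have hy := mul_nonneg py.le (norm_nonneg y)
      have fin : 2 * (a1 * K) ≤ ((1 + β * Lf) * (2 * (2 ^ (s+1) * (a1 * K))) + 2 * (a1 * K)) * ‖x - y‖ := by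
        refine le_trans ?_ (le_mul_of_one_le_right (by linarith) hxy)
        linarith
      constructor
      · refine bnd _ (le_trans ?_ fin)
        rw [abs_le]; constructor <;> linarith
      · refine bnd _ (le_trans ?_ fin)
        refine (norm_sub_le _ _).trans ?_
        rw [norm_smul, norm_smul, Real.norm_of_nonneg px.le, Real.norm_of_nonneg py.le]
        linarith

lemma toBochner {α : Type*} [MeasurableSpace α] {π : Measure α} {d : ℕ} {g : α → Rd d}
    (hg : Measurable g) {p : ℝ} (hp : 0 ≤ p) (h : ∫⁻ z, (‖g z‖₊ : ℝ≥0∞) ^ p ∂π < ⊤) :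
    Integrable (fun z => ‖g z‖ ^ p) π ∧
      ENNReal.ofReal (∫ z, ‖g z‖ ^ p ∂π) = ∫⁻ z, (‖g z‖₊ : ℝ≥0∞) ^ p ∂π := by
  have e : ∀ z, ENNReal.ofReal (‖g z‖ ^ p) = (‖g z‖₊ : ℝ≥0∞) ^ p := fun z => by
    rw [← ENNReal.ofReal_rpow_of_nonneg (norm_nonneg _) hp, ofReal_norm]; rfl
  have hi : Integrable (fun z => ‖g z‖ ^ p) π := by
    refine ⟨(hg.norm.pow_const p).aestronglyMeasurable, ?_⟩
    rw [hasFiniteIntegral_iff_ofReal (Filter.Eventually.of_forall fun z => by positivity)]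
    simpa only [e] using h
  refine ⟨hi, ?_⟩
  rw [ofReal_integral_eq_lintegral_ofReal hi (Filter.Eventually.of_forall fun z => by positivity)]
  simp only [e]

lemma f_cont {d : ℕ} {f : Rd d → ℝ} {s Lf : ℝ} (hs : 0 ≤ s)
    (h : ∀ x y : Rd d, |f x - f y| ≤ Lf * (1 + ‖x‖ + ‖y‖) ^ s * ‖x - y‖) : Continuous f := by
  rw [continuous_iff_continuousAt]
  intro x
  rw [ContinuousAt, tendsto_iff_dist_tendsto_zero]
  have ht : Filter.Tendsto (fun y : Rd d => Lf * (1 + ‖y‖ + ‖x‖) ^ s * ‖y - x‖) (nhds x) (nhds 0) := by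
    have : Continuous (fun y : Rd d => Lf * (1 + ‖y‖ + ‖x‖) ^ s * ‖y - x‖) := by
      have : Continuous (fun y : Rd d => (1 + ‖y‖ + ‖x‖) ^ s) :=
        Continuous.rpow_const (by fun_prop) (fun _ => Or.inr hs)
      fun_prop
    have h2 := this.tendsto x
    simpa using h2
  exact squeeze_zero (fun _ => dist_nonneg) (fun y => by rw [Real.dist_eq]; exact h y x) ht

/-- **Improved Wasserstein stability estimate for the weighted mean.**
If `f ∈ A(s, ℓ, ℓ)`, then for every `R > 0` and `p ≥ p_M(s, ℓ)` there is `L̃ > 0`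
such that `|M_β(μ) - M_β(ν)| ≤ L̃ ⬝ W_p(μ, ν)` for all `μ ∈ P_{p,R}(ℝ^d)` and
`ν ∈ P_p(ℝ^d)`. -/
theorem weighted_mean_stability_improved
    (β : ℝ) (hβ : 0 < β) (d : ℕ) (hd : 1 ≤ d)
    (s ℓ : ℝ) (hs : 0 ≤ s) (hℓ : 0 ≤ ℓ)
    (f : Rd d → ℝ) (hf : ClassA s ℓ ℓ f)
    (R : ℝ) (hR : 0 < R) (p : ℝ) (hp : pM s ℓ ≤ p) :
    ∃ L > 0, ∀ μ ν : Measure (Rd d),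
      IsProbabilityMeasure μ → IsProbabilityMeasure ν →
      MomLE p R μ → MomFin p ν →
      ‖wMean β f μ - wMean β f ν‖ ≤ L * Wp p μ ν := by
  have hp1 : 1 ≤ p := by
    unfold pM at hp; split_ifs at hp <;> linarith
  have hp0 : 0 < p := by linarith
  have hp2 : ℓ = 0 → s + 2 ≤ p := by
    intro h; unfold pM at hp; rwa [if_pos h] at hp
  obtain ⟨-, ⟨Lf, hLf, hlip⟩, ⟨cl, hcl, Cl, hCl, hlo⟩, ⟨cu, hcu, Cu, hCu, hup⟩⟩ := hf
  have hcont : Continuous (wFn β f) := by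
    have := f_cont hs hlip
    unfold wFn; fun_prop
  set a1 := Real.exp (β * (Cl - fStar f)) with ha1
  set a2 := Real.exp (-β * (Cu + fStar f)) with ha2
  have h1 : ∀ x, wFn β f x ≤ a1 * Real.exp (-(β * cl) * ‖x‖ ^ ℓ) := fun x => by
    rw [ha1, ← Real.exp_add]; apply Real.exp_le_exp.2
    have := mul_le_mul_of_nonneg_left (hlo x) hβ.le
    linarith
  have h2 : ∀ x, a2 * Real.exp (-(β * cu) * ‖x‖ ^ ℓ) ≤ wFn β f x := fun x => by
    rw [ha2, ← Real.exp_add]; apply Real.exp_le_exp.2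
    have := mul_le_mul_of_nonneg_left (hup x) hβ.le
    linarith
  have pa1 : 0 < a1 := Real.exp_pos _
  have pa2 : 0 < a2 := Real.exp_pos _
  have pb1 : 0 < β * cl := by positivity
  have pb2 : 0 < β * cu := by positivity
  obtain ⟨C1, hC1, hmean⟩ := mean_bound hcont hℓ pa1 pb1 pa2 pb2 h1 h2
  obtain ⟨D, hD, hDl⟩ := lip_full hβ hs hℓ hLf hlip pa1 pb1 h1 hp1 hp2
  have hB : ∀ x, wFn β f x ≤ a1 := fun x => (h1 x).trans (by
    have := exp_aux pa1 pb1 (u := 0) (v := ‖x‖ ^ ℓ) (by positivity)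
    simpa using this)
  have hlow : ∀ r : ℝ, ∃ c > 0, ∀ x, ‖x‖ ≤ r → c ≤ wFn β f x := fun r =>
    ⟨a2 * Real.exp (-(β * cu) * r ^ ℓ), by positivity, fun x hx =>
      (exp_aux pa2 pb2 (Real.rpow_le_rpow (norm_nonneg x) hx hℓ)).trans (h2 x)⟩
  obtain ⟨L, hL, hcore⟩ := core (wFn_pos β f) hcont hB hp1 hD (fun x y => (hDl x y).1)
    (fun x y => (hDl x y).2) hC1 hmean hlow hR
  refine ⟨L, hL, fun μ ν hμ hν hmμ hmν => ?_⟩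
  unfold MomLE at hmμ
  unfold MomFin at hmν
  have m1 : Measurable (fun x : Rd d => (‖x‖₊ : ℝ≥0∞) ^ p) := by fun_prop
  rw [← div_le_iff₀' hL]
  unfold Wp
  rw [← ENNReal.ofReal_le_iff_le_toReal]
  · refine le_sInf ?_
    rintro c ⟨π, hπ1, hπ2, rfl⟩
    have hπ : IsProbabilityMeasure π := by
      constructor
      have : (π.map Prod.fst) Set.univ = 1 := by rw [hπ1]; exact measure_univ
      rwa [Measure.map_apply measurable_fst MeasurableSet.univ, Set.preimage_univ] at this
    rcases eq_or_ne (∫⁻ z, (‖z.1 - z.2‖₊ : ℝ≥0∞) ^ p ∂π) ⊤ with ht | ht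
    · rw [ht, ENNReal.top_rpow_of_pos (by positivity)]; exact le_top
    · have tB := toBochner (g := fun z : Rd d × Rd d => z.1 - z.2) (π := π) (by fun_prop) hp0.le
        (lt_top_iff_ne_top.2 ht)
      rw [← hπ1, lintegral_map m1 measurable_fst] at hmμ
      have tX := toBochner (g := fun z : Rd d × Rd d => z.1) (π := π) measurable_fst hp0.le
        (lt_of_le_of_lt hmμ ENNReal.ofReal_lt_top)
      rw [← tX.2, ENNReal.ofReal_le_ofReal_iff (by positivity)] at hmμ
      have hh := hcore π hπ tX.1 hmμ tB.1
      rw [hπ1, hπ2] at hh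
      rw [← tB.2, ENNReal.ofReal_rpow_of_nonneg (integral_nonneg fun z => by positivity)
        (by positivity)]
      apply ENNReal.ofReal_le_ofReal
      rw [div_le_iff₀' hL]
      exact hh
  · refine ne_top_of_le_ne_top ?_ (sInf_le ⟨μ.prod ν, ?_, ?_, rfl⟩)
    · apply ENNReal.rpow_ne_top_of_nonneg (by positivity)
      have hb : ∀ z : Rd d × Rd d, (‖z.1 - z.2‖₊ : ℝ≥0∞) ^ p ≤
          2 ^ (p-1) * ((‖z.1‖₊ : ℝ≥0∞) ^ p + (‖z.2‖₊ : ℝ≥0∞) ^ p) := fun z => by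
        refine le_trans ?_ (ENNReal.rpow_add_le_mul_rpow_add_rpow _ _ hp1)
        apply ENNReal.rpow_le_rpow _ hp0.le
        exact_mod_cast nnnorm_sub_le z.1 z.2
      refine ne_top_of_le_ne_top ?_ (lintegral_mono hb)
      rw [lintegral_const_mul _ (by fun_prop), lintegral_add_left (by fun_prop)]
      have e1 : ∫⁻ z : Rd d × Rd d, (‖z.1‖₊ : ℝ≥0∞) ^ p ∂(μ.prod ν) = ∫⁻ x, (‖x‖₊ : ℝ≥0∞) ^ p ∂μ := by
        rw [← lintegral_map (μ := μ.prod ν) m1 measurable_fst, Measure.map_fst_prod]; simp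
      have e2 : ∫⁻ z : Rd d × Rd d, (‖z.2‖₊ : ℝ≥0∞) ^ p ∂(μ.prod ν) = ∫⁻ x, (‖x‖₊ : ℝ≥0∞) ^ p ∂ν := by
        rw [← lintegral_map (μ := μ.prod ν) m1 measurable_snd, Measure.map_snd_prod]; simp
      rw [e1, e2]
      refine ENNReal.mul_ne_top (ENNReal.rpow_ne_top_of_nonneg (by linarith) (by norm_num))
        (ENNReal.add_ne_top.2 ⟨(lt_of_le_of_lt hmμ ENNReal.ofReal_lt_top).ne, hmν.ne⟩)
    · rw [Measure.map_fst_prod]; simp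
    · rw [Measure.map_snd_prod]; simp

end
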